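/- Applicative bisimilarity ≈ on λ_S is a congruence: if t0 ≈° t1 (open extension), then C[t0] ≈° C[t1] for every context C. -/

import Mathlib

namespace LamS

/-- Terms of the λ-calculus with shift and reset, in de Bruijn representation.
    `lam` and `shift` bind variable 0. -/
inductive Tm : Type
  | var : ℕ → Tm
  | lam : Tm → Tm
  | app : Tm → Tm → Tm
  | shift : Tm → Tm
  | reset : Tm → Tm
  deriving DecidableEq

open Tm

/-- Lift (shift up) free de Bruijn indices `≥ c` by `d`. -/
def liftT (d : ℕ) : ℕ → Tm → Tm
  | c, var n => if n < c then var n else var (n + d)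
  | c, lam t => lam (liftT d (c+1) t)
  | c, app a b => app (liftT d c a) (liftT d c b)
  | c, shift t => shift (liftT d (c+1) t)
  | c, reset t => reset (liftT d c t)

/-- Capture-avoiding substitution `t[j := s]` (de Bruijn). -/
def substT : ℕ → Tm → Tm → Tm
  | j, s, var n => if n = j then liftT j 0 s else if j < n then var (n-1) else var n
  | j, s, lam t => lam (substT (j+1) s t)
  | j, s, app a b => app (substT j s a) (substT j s b)
  | j, s, shift t => shift (substT (j+1) s t)
  | j, s, reset t => reset (substT j s t)

/-- Values are λ-abstractions. -/
def IsValue (t : Tm) : Prop := ∃ b, t = lam b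

/-- All free variables are `< n`. -/
def ClosedUnder : ℕ → Tm → Prop
  | n, var m => m < n
  | n, lam t => ClosedUnder (n+1) t
  | n, app a b => ClosedUnder n a ∧ ClosedUnder n b
  | n, shift t => ClosedUnder (n+1) t
  | n, reset t => ClosedUnder n t

def Closed (t : Tm) : Prop := ClosedUnder 0 t

/-- Pure evaluation contexts, interpreted inside-out:
    `appV b E` is `E[(λ.b) []]` and `appL E t` is `E[[] t]`. -/
inductive PCtx : Type
  | hole : PCtx
  | appV : Tm → PCtx → PCtx
  | appL : PCtx → Tm → PCtx
  deriving DecidableEq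

def PCtx.plug : PCtx → Tm → Tm
  | .hole, t => t
  | .appV b E, t => E.plug (app (lam b) t)
  | .appL E s, t => E.plug (app t s)

def PCtx.liftC (d : ℕ) : ℕ → PCtx → PCtx
  | _, .hole => .hole
  | c, .appV b E => .appV (liftT d (c+1) b) (PCtx.liftC d c E)
  | c, .appL E s => .appL (PCtx.liftC d c E) (liftT d c s)

/-- Composition of pure contexts: `(E.comp E').plug t = E.plug (E'.plug t)`. -/
def PCtx.comp : PCtx → PCtx → PCtx
  | E, .hole => E
  | E, .appV b E' => .appV b (E.comp E')
  | E, .appL E' s => .appL (E.comp E') s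

/-- The captured delimited continuation `λx.⟨E[x]⟩`. -/
def contOf (E : PCtx) : Tm := lam (reset ((PCtx.liftC 1 0 E).plug (var 0)))

/-- Call-by-value evaluation contexts, interpreted inside-out. -/
inductive ECtx : Type
  | hole : ECtx
  | appV : Tm → ECtx → ECtx
  | appL : ECtx → Tm → ECtx
  | resetC : ECtx → ECtx
  deriving DecidableEq

def ECtx.plug : ECtx → Tm → Tm
  | .hole, t => t
  | .appV b F, t => F.plug (app (lam b) t)
  | .appL F s, t => F.plug (app t s)
  | .resetC F, t => F.plug (reset t)

def ClosedECtx : ECtx → Prop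
  | .hole => True
  | .appV b F => ClosedUnder 1 b ∧ ClosedECtx F
  | .appL F s => ClosedECtx F ∧ Closed s
  | .resetC F => ClosedECtx F

/-- One-step reduction of λ_S. -/
inductive Red : Tm → Tm → Prop
  | beta (F : ECtx) (t v : Tm) (hv : IsValue v) :
      Red (F.plug (app (lam t) v)) (F.plug (substT 0 v t))
  | cap (F : ECtx) (E : PCtx) (t : Tm) :
      Red (F.plug (reset (E.plug (shift t)))) (F.plug (reset (substT 0 (contOf E) t)))
  | res (F : ECtx) (v : Tm) (hv : IsValue v) :
      Red (F.plug (reset v)) (F.plug v)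

def RedStar : Tm → Tm → Prop := Relation.ReflTransGen Red

/-- A term is stuck if it is not a value and cannot reduce. -/
def Stuck (t : Tm) : Prop := ¬ IsValue t ∧ ∀ u, ¬ Red t u

/-- Evaluation: reduce to an irreducible term. -/
def Eval (t t' : Tm) : Prop := RedStar t t' ∧ ∀ u, ¬ Red t' u

def IsRedex (r : Tm) : Prop :=
  (∃ t v, IsValue v ∧ r = app (lam t) v) ∨
  (∃ E s, r = reset (PCtx.plug E (shift s))) ∨
  (∃ v, IsValue v ∧ r = reset v)

/-- Labels of the LTS. -/
inductive Label : Type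
  | tau : Label
  | val : Tm → Label
  | ctx : PCtx → Label

/-- The labelled transition system for λ_S. -/
inductive Step : Tm → Label → Tm → Prop
  | beta {t v : Tm} (hv : IsValue v) :
      Step (app (lam t) v) .tau (substT 0 v t)
  | resetVal {v : Tm} (hv : IsValue v) :
      Step (reset v) .tau v
  | appL {t0 t0' t1 : Tm} :
      Step t0 .tau t0' → Step (app t0 t1) .tau (app t0' t1)
  | appR {v t t' : Tm} (hv : IsValue v) :
      Step t .tau t' → Step (app v t) .tau (app v t')
  | resetT {t t' : Tm} :
      Step t .tau t' → Step (reset t) .tau (reset t')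
  | resetCap {t t' : Tm} :
      Step t (.ctx .hole) t' → Step (reset t) .tau t'
  | lamApp {t v : Tm} (hv : IsValue v) :
      Step (lam t) (.val v) (substT 0 v t)
  | shiftCap {t : Tm} (E : PCtx) :
      Step (shift t) (.ctx E) (reset (substT 0 (contOf E) t))
  | capL {t0 t0' t1 : Tm} {E : PCtx} :
      Step t0 (.ctx (.appL E t1)) t0' → Step (app t0 t1) (.ctx E) t0'
  | capR {b t t' : Tm} {E : PCtx} :
      Step t (.ctx (.appV b E)) t' → Step (app (lam b) t) (.ctx E) t'

def TauStar : Tm → Tm → Prop := Relation.ReflTransGen (fun a b => Step a .tau b)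

/-- Weak delay transition: τ-steps, then an `l`-step if `l ≠ τ`. -/
def Weak (t : Tm) (l : Label) (t' : Tm) : Prop :=
  match l with
  | .tau => TauStar t t'
  | _ => ∃ u, TauStar t u ∧ Step u l t'

/-- Applicative simulation. -/
def IsSim (R : Tm → Tm → Prop) : Prop :=
  ∀ ⦃t0 t1⦄, R t0 t1 → ∀ ⦃l t0'⦄, Step t0 l t0' →
    ∃ t1', Weak t1 l t1' ∧ R t0' t1'

def IsBisim (R : Tm → Tm → Prop) : Prop := IsSim R ∧ IsSim (flip R)

/-- Applicative bisimilarity: the largest applicative bisimulation. -/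
def Bisim (t0 t1 : Tm) : Prop := ∃ R, IsBisim R ∧ R t0 t1

/-- Big-step applicative simulation. -/
def IsBigSim (R : Tm → Tm → Prop) : Prop :=
  ∀ ⦃t0 t1⦄, R t0 t1 → ∀ ⦃l t0'⦄, l ≠ Label.tau → Weak t0 l t0' →
    ∃ t1', Weak t1 l t1' ∧ R t0' t1'

def IsBigBisim (R : Tm → Tm → Prop) : Prop := IsBigSim R ∧ IsBigSim (flip R)

/-- Big-step applicative bisimilarity. -/
def BigBisim (t0 t1 : Tm) : Prop := ∃ R, IsBigBisim R ∧ R t0 t1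

/-- General contexts. -/
inductive Ctx : Type
  | hole : Ctx
  | lam : Ctx → Ctx
  | appL : Ctx → Tm → Ctx
  | appR : Tm → Ctx → Ctx
  | shift : Ctx → Ctx
  | reset : Ctx → Ctx

/-- Plugging a term in a general context (free variables may be captured). -/
def Ctx.plug : Ctx → Tm → Tm
  | .hole, t => t
  | .lam C, t => Tm.lam (C.plug t)
  | .appL C s, t => Tm.app (C.plug t) s
  | .appR s C, t => Tm.app s (C.plug t)
  | .shift C, t => Tm.shift (C.plug t)
  | .reset C, t => Tm.reset (C.plug t)

def CtxClosedUnder : ℕ → Ctx → Prop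
  | _, .hole => True
  | n, .lam C => CtxClosedUnder (n+1) C
  | n, .appL C s => CtxClosedUnder n C ∧ ClosedUnder n s
  | n, .appR s C => ClosedUnder n s ∧ CtxClosedUnder n C
  | n, .shift C => CtxClosedUnder (n+1) C
  | n, .reset C => CtxClosedUnder n C

def ClosedCtx (C : Ctx) : Prop := CtxClosedUnder 0 C

def EvalsToValue (t : Tm) : Prop := ∃ v, IsValue v ∧ Eval t v

def EvalsToStuck (t : Tm) : Prop := ∃ s, Stuck s ∧ Eval t s

/-- Contextual equivalence on closed terms. -/
def CtxEquiv (t0 t1 : Tm) : Prop :=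
  ∀ C : Ctx, ClosedCtx C →
    (EvalsToValue (C.plug t0) ↔ EvalsToValue (C.plug t1)) ∧
    (EvalsToStuck (C.plug t0) ↔ EvalsToStuck (C.plug t1))

/-- Contextual equivalence restricted to evaluation contexts. -/
def ECtxEquiv (t0 t1 : Tm) : Prop :=
  ∀ F : ECtx, ClosedECtx F →
    (EvalsToValue (F.plug t0) ↔ EvalsToValue (F.plug t1)) ∧
    (EvalsToStuck (F.plug t0) ↔ EvalsToStuck (F.plug t1))

/-- Lifting a substitution under a binder. -/
def liftSub (σ : ℕ → Tm) : ℕ → Tm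
  | 0 => var 0
  | n+1 => liftT 1 0 (σ n)

/-- Apply a substitution to all free variables of a term. -/
def applySub (σ : ℕ → Tm) : Tm → Tm
  | var n => σ n
  | lam t => lam (applySub (liftSub σ) t)
  | app a b => app (applySub σ a) (applySub σ b)
  | shift t => shift (applySub (liftSub σ) t)
  | reset t => reset (applySub σ t)

/-- A closing substitution maps every variable to a closed value. -/
def ClosingSub (σ : ℕ → Tm) : Prop := ∀ n, IsValue (σ n) ∧ Closed (σ n)

/-- Open extension of a relation on closed terms. -/
def OpenExt (R : Tm → Tm → Prop) (t0 t1 : Tm) : Prop :=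
  ∀ σ, ClosingSub σ → R (applySub σ t0) (applySub σ t1)

/-- Howe's closure of applicative bisimilarity (compatible refinement rules inlined). -/
inductive Howe : Tm → Tm → Prop
  | base {t0 t1} : OpenExt Bisim t0 t1 → Howe t0 t1
  | right {t0 t2 t1} : Howe t0 t2 → OpenExt Bisim t2 t1 → Howe t0 t1
  | compVar (n : ℕ) : Howe (var n) (var n)
  | compLam {t0 t1} : Howe t0 t1 → Howe (lam t0) (lam t1)
  | compApp {a0 a1 b0 b1} : Howe a0 a1 → Howe b0 b1 → Howe (app a0 b0) (app a1 b1)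
  | compShift {t0 t1} : Howe t0 t1 → Howe (shift t0) (shift t1)
  | compReset {t0 t1} : Howe t0 t1 → Howe (reset t0) (reset t1)

/-- Howe's closure restricted to closed terms. -/
def HoweC (t0 t1 : Tm) : Prop := Closed t0 ∧ Closed t1 ∧ Howe t0 t1

/-- Extension of Howe's closure to pure contexts. -/
inductive PCtxHowe : PCtx → PCtx → Prop
  | hole : PCtxHowe .hole .hole
  | appV {b0 b1 E0 E1} : Howe b0 b1 → PCtxHowe E0 E1 → PCtxHowe (.appV b0 E0) (.appV b1 E1)
  | appL {E0 E1 t0 t1} : PCtxHowe E0 E1 → Howe t0 t1 → PCtxHowe (.appL E0 t0) (.appL E1 t1)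

/-- Extension of Howe's closure to labels. -/
def LabHowe : Label → Label → Prop
  | .tau, .tau => True
  | .val v0, .val v1 => Closed v0 ∧ Closed v1 ∧ Howe v0 v1
  | .ctx E0, .ctx E1 => PCtxHowe E0 E1
  | _, _ => False

/-- ω = λx. x x -/
def omegaTm : Tm := lam (app (var 0) (var 0))

/-- Ω = ω ω, the standard diverging term. -/
def OmegaTm : Tm := app omegaTm omegaTm

/-- Every τ-reachable term can do a τ-step: only infinite τ-sequences. -/
def Diverges (t : Tm) : Prop := ∀ u, TauStar t u → ∃ u', Step u .tau u'

/-- No weak non-τ transition. -/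
def NoObs (t : Tm) : Prop := ∀ l t', l ≠ Label.tau → ¬ Weak t l t'

end LamS

namespace LamS
open Tm

/-! ### Substitution algebra -/

def upR (f : ℕ → ℕ) : ℕ → ℕ
  | 0 => 0
  | n+1 => f n + 1

theorem liftT_eq (d : ℕ) : ∀ (t : Tm) (c : ℕ),
    liftT d c t = applySub (fun i => var (if i < c then i else i + d)) t := by
  have key : ∀ c : ℕ, liftSub (fun i => var (if i < c then i else i + d))
      = fun i => var (if i < c + 1 then i else i + d) := by
    intro c; funext i
    cases i with
    | zero => simp [liftSub]
    | succ i =>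
      simp only [liftSub, liftT, Nat.not_lt_zero, if_false]
      by_cases h : i < c
      · simp [h]
      · simp [h]; omega
  intro t
  induction t with
  | var n => intro c; simp only [liftT, applySub]; split_ifs <;> rfl
  | lam t ih => intro c; simp only [liftT, applySub, key, ih]
  | app a b iha ihb => intro c; simp only [liftT, applySub, iha, ihb]
  | shift t ih => intro c; simp only [liftT, applySub, key, ih]
  | reset t ih => intro c; simp only [liftT, applySub, ih]

theorem lift1_eq (t : Tm) : liftT 1 0 t = applySub (fun i => var (i+1)) t := by
  rw [liftT_eq]; simp

theorem liftSub_ren (f : ℕ → ℕ) : liftSub (fun i => var (f i)) = fun i => var (upR f i) := by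
  funext i
  cases i with
  | zero => rfl
  | succ i => simp [liftSub, liftT, upR]

theorem liftSub_var : liftSub var = var := by
  funext i
  cases i with
  | zero => rfl
  | succ i => simp [liftSub, liftT]

theorem applySub_var (t : Tm) : applySub var t = t := by
  induction t with
  | var n => rfl
  | lam t ih => simp only [applySub, liftSub_var, ih]
  | app a b iha ihb => simp only [applySub, iha, ihb]
  | shift t ih => simp only [applySub, liftSub_var, ih]
  | reset t ih => simp only [applySub, ih]

theorem sub_ren (t : Tm) : ∀ (σ : ℕ → Tm) (f : ℕ → ℕ),
    applySub σ (applySub (fun i => var (f i)) t) = applySub (fun i => σ (f i)) t := by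
  have key : ∀ (σ : ℕ → Tm) (f : ℕ → ℕ),
      (fun i => liftSub σ (upR f i)) = liftSub (fun i => σ (f i)) := by
    intro σ f; funext i
    cases i <;> rfl
  induction t with
  | var n => intro σ f; rfl
  | lam t ih => intro σ f; simp only [applySub, liftSub_ren, ih, key]
  | app a b iha ihb => intro σ f; simp only [applySub, iha, ihb]
  | shift t ih => intro σ f; simp only [applySub, liftSub_ren, ih, key]
  | reset t ih => intro σ f; simp only [applySub, ih]

theorem ren_sub (t : Tm) : ∀ (σ : ℕ → Tm) (f : ℕ → ℕ),
    applySub (fun i => var (f i)) (applySub σ t)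
      = applySub (fun i => applySub (fun i => var (f i)) (σ i)) t := by
  have key : ∀ (σ : ℕ → Tm) (f : ℕ → ℕ),
      (fun i => applySub (fun i => var (upR f i)) (liftSub σ i))
        = liftSub (fun i => applySub (fun i => var (f i)) (σ i)) := by
    intro σ f; funext i
    cases i with
    | zero => rfl
    | succ i => simp only [liftSub, lift1_eq, sub_ren, upR]
  induction t with
  | var n => intro σ f; rfl
  | lam t ih => intro σ f; simp only [applySub, liftSub_ren, ih, key]
  | app a b iha ihb => intro σ f; simp only [applySub, iha, ihb]
  | shift t ih => intro σ f; simp only [applySub, liftSub_ren, ih, key]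
  | reset t ih => intro σ f; simp only [applySub, ih]

theorem sub_sub (t : Tm) : ∀ (σ τ : ℕ → Tm),
    applySub τ (applySub σ t) = applySub (fun i => applySub τ (σ i)) t := by
  have key : ∀ (σ τ : ℕ → Tm),
      (fun i => applySub (liftSub τ) (liftSub σ i)) = liftSub (fun i => applySub τ (σ i)) := by
    intro σ τ; funext i
    cases i with
    | zero => rfl
    | succ i => simp only [liftSub, lift1_eq, sub_ren, ren_sub]
  induction t with
  | var n => intro σ f; rfl
  | lam t ih => intro σ f; simp only [applySub, ih, key]
  | app a b iha ihb => intro σ f; simp only [applySub, iha, ihb]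
  | shift t ih => intro σ f; simp only [applySub, ih, key]
  | reset t ih => intro σ f; simp only [applySub, ih]

/-- The substitution `[0 := v]`. -/
def single (v : Tm) : ℕ → Tm
  | 0 => v
  | n+1 => var n

theorem liftT_zero (t : Tm) (c : ℕ) : liftT 0 c t = t := by
  rw [liftT_eq]
  simp only [Nat.add_zero, ite_self]
  exact applySub_var t

theorem substT_eq (s : Tm) : ∀ (t : Tm) (j : ℕ),
    substT j s t = applySub (fun n => if n = j then liftT j 0 s else if j < n then var (n-1)
      else var n) t := by
  have key : ∀ j : ℕ, liftSub (fun n => if n = j then liftT j 0 s else if j < n then var (n-1)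
      else var n) = (fun n => if n = j+1 then liftT (j+1) 0 s else if j+1 < n then var (n-1)
      else var n) := by
    intro j; funext i
    cases i with
    | zero => simp [liftSub]
    | succ i =>
      simp only [liftSub]
      by_cases h : i = j
      · subst h
        simp only [if_true, lift1_eq]
        rw [liftT_eq, liftT_eq, sub_ren]
        simp [Nat.add_assoc]
      · by_cases h2 : j < i
        · have : i - 1 + 1 = i := by omega
          simp [h, h2, liftT, this]
        · simp [h, h2, liftT]
  intro t
  induction t with
  | var n => intro c; simp only [substT, applySub]
  | lam t ih => intro c; simp only [substT, applySub, key, ih]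
  | app a b iha ihb => intro c; simp only [substT, applySub, iha, ihb]
  | shift t ih => intro c; simp only [substT, applySub, key, ih]
  | reset t ih => intro c; simp only [substT, applySub, ih]

theorem subst0_eq (v t : Tm) : substT 0 v t = applySub (single v) t := by
  rw [substT_eq]
  congr 1
  funext i
  cases i with
  | zero => simp [single, liftT_zero]
  | succ i => simp [single]

theorem rtg_lift {R S : Tm → Tm → Prop} (f : Tm → Tm) (hf : ∀ a b, R a b → S (f a) (f b)) {a b}
    (h : Relation.ReflTransGen R a b) : Relation.ReflTransGen S (f a) (f b) := by
  induction h with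
  | refl => exact .refl
  | tail _ h ih => exact .tail ih (hf _ _ h)

theorem tg_lift {R S : Tm → Tm → Prop} (f : Tm → Tm) (hf : ∀ a b, R a b → S (f a) (f b)) {a b}
    (h : Relation.TransGen R a b) : Relation.TransGen S (f a) (f b) := by
  induction h with
  | single h => exact .single (hf _ _ h)
  | tail _ h ih => exact .tail ih (hf _ _ h)

/-! ### Weak transitions and bisimilarity -/

theorem Weak.of_step {t l t'} (h : Step t l t') : Weak t l t' := by
  cases l with
  | tau => exact Relation.ReflTransGen.single h
  | val v => exact ⟨t, .refl, h⟩
  | ctx E => exact ⟨t, .refl, h⟩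

theorem Weak.prepend {t u l t'} (h : TauStar t u) (h' : Weak u l t') : Weak t l t' := by
  cases l with
  | tau => exact Relation.ReflTransGen.trans h h'
  | val v => obtain ⟨w, h1, h2⟩ := h'; exact ⟨w, Relation.ReflTransGen.trans h h1, h2⟩
  | ctx v => obtain ⟨w, h1, h2⟩ := h'; exact ⟨w, Relation.ReflTransGen.trans h h1, h2⟩

theorem IsSim.tau {R} (hR : IsSim R) {t s t'} (h : R t s) (hs : TauStar t t') :
    ∃ s', TauStar s s' ∧ R t' s' := by
  induction hs with
  | refl => exact ⟨s, .refl, h⟩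
  | tail _ hst ih =>
    obtain ⟨s1, h1, h2⟩ := ih
    obtain ⟨s2, h3, h4⟩ := hR h2 hst
    exact ⟨s2, Relation.ReflTransGen.trans h1 h3, h4⟩

theorem IsSim.weak {R} (hR : IsSim R) {t s l t'} (h : R t s) (hs : Weak t l t') :
    ∃ s', Weak s l s' ∧ R t' s' := by
  have aux : ∀ u, TauStar t u → Step u l t' → ∃ s', Weak s l s' ∧ R t' s' := by
    intro u h1 h2
    obtain ⟨s1, h3, h4⟩ := hR.tau h h1
    obtain ⟨s2, h5, h6⟩ := hR h4 h2
    exact ⟨s2, h5.prepend h3, h6⟩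
  cases l with
  | tau => exact hR.tau h hs
  | val v => obtain ⟨u, h1, h2⟩ := hs; exact aux u h1 h2
  | ctx v => obtain ⟨u, h1, h2⟩ := hs; exact aux u h1 h2

theorem isSim_comp {R S} (hR : IsSim R) (hS : IsSim S) :
    IsSim (fun a c => ∃ b, R a b ∧ S b c) := by
  rintro a c ⟨b, h1, h2⟩ l a' hs
  obtain ⟨b', h3, h4⟩ := hR h1 hs
  obtain ⟨c', h5, h6⟩ := hS.weak h2 h3
  exact ⟨c', h5, b', h4, h6⟩

theorem isSim_bisim : IsSim Bisim := by
  rintro a b ⟨R, hR, h⟩ l a' hs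
  obtain ⟨b', h1, h2⟩ := hR.1 h hs
  exact ⟨b', h1, R, hR, h2⟩

theorem Bisim.symm {a b} (h : Bisim a b) : Bisim b a := by
  obtain ⟨R, hR, h⟩ := h
  exact ⟨flip R, ⟨hR.2, hR.1⟩, h⟩

theorem Bisim.refl (a : Tm) : Bisim a a := by
  refine ⟨Eq, ⟨?_, ?_⟩, rfl⟩
  · rintro a b rfl l a' h
    exact ⟨a', .of_step h, rfl⟩
  · rintro a b h l a' hs
    cases h
    exact ⟨a', .of_step hs, rfl⟩

theorem Bisim.trans {a b c} (h : Bisim a b) (h' : Bisim b c) : Bisim a c := by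
  obtain ⟨R, hR, h⟩ := h
  obtain ⟨S, hS, h'⟩ := h'
  refine ⟨fun a c => ∃ b, R a b ∧ S b c, ⟨isSim_comp hR.1 hS.1, ?_⟩, b, h, h'⟩
  have := isSim_comp hS.2 hR.2
  rintro c a ⟨b, h1, h2⟩ l c' hs
  obtain ⟨a', h3, b', h4, h5⟩ := this ⟨b, h2, h1⟩ hs
  exact ⟨a', h3, b', h5, h4⟩

theorem no_tau_lam {b u} (h : Step (lam b) .tau u) : False := by cases h

theorem tauStar_lam {b u} (h : TauStar (lam b) u) : u = lam b := by
  induction h with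
  | refl => rfl
  | tail _ hs ih => subst ih; exact (no_tau_lam hs).elim

/-- A term bisimilar to an abstraction evaluates to a bisimilar abstraction. -/
theorem Bisim.lam_eval {b s} (h : Bisim (lam b) s) :
    ∃ a, TauStar s (lam a) ∧ Bisim (lam b) (lam a) := by
  have hv : IsValue (lam (var 0)) := ⟨_, rfl⟩
  obtain ⟨s', ⟨u, h1, h2⟩, _⟩ := isSim_bisim h (Step.lamApp (t := b) hv)
  cases h2 with
  | @lamApp a _ _ =>
    refine ⟨a, h1, ?_⟩
    obtain ⟨w, h3, h4⟩ := isSim_bisim.tau h.symm h1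
    rw [tauStar_lam h3] at h4
    exact h4.symm

theorem Bisim.lam_app {b a v} (h : Bisim (lam b) (lam a)) (hv : IsValue v) :
    Bisim (substT 0 v b) (substT 0 v a) := by
  obtain ⟨s', ⟨u, h1, h2⟩, h3⟩ := isSim_bisim h (Step.lamApp (t := b) hv)
  rw [tauStar_lam h1] at h2
  cases h2
  exact h3

/-! ### The scoped open extension and Howe closure -/

/-- Variables `< n` go to values, the others are treated as constants. -/
def Clo (n : ℕ) (ρ : ℕ → Tm) : Prop := (∀ i, i < n → IsValue (ρ i)) ∧ ∀ i, ρ (n + i) = var i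

def OE (n : ℕ) (t s : Tm) : Prop := ∀ ρ, Clo n ρ → Bisim (applySub ρ t) (applySub ρ s)

theorem OE.refl (n t) : OE n t t := fun _ _ => Bisim.refl _
theorem OE.symm {n t s} (h : OE n t s) : OE n s t := fun ρ hρ => (h ρ hρ).symm
theorem OE.trans {n t s u} (h : OE n t s) (h' : OE n s u) : OE n t u :=
  fun ρ hρ => (h ρ hρ).trans (h' ρ hρ)

theorem clo0 {ρ} (h : Clo 0 ρ) : ρ = var := by
  funext i
  have := h.2 i
  rwa [Nat.zero_add] at this

theorem clo_var : Clo 0 var := ⟨fun i hi => absurd hi (Nat.not_lt_zero i), fun i => by simp⟩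

theorem OE_zero {t s} : OE 0 t s ↔ Bisim t s := by
  constructor
  · intro h
    have := h var clo_var
    rwa [applySub_var, applySub_var] at this
  · intro h ρ hρ
    rwa [clo0 hρ, applySub_var, applySub_var]

/-- Open values in scope `n`. -/
def PV (n : ℕ) (t : Tm) : Prop := IsValue t ∨ ∃ i, i < n ∧ t = var i

theorem PV.value {n t ρ} (h : PV n t) (hρ : ∀ i, i < n → IsValue (ρ i)) :
    IsValue (applySub ρ t) := by
  rcases h with ⟨b, rfl⟩ | ⟨i, hi, rfl⟩
  · exact ⟨_, rfl⟩
  · exact hρ i hi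

theorem PV.lift {n t} (h : PV n t) : PV (n+1) (liftT 1 0 t) := by
  rcases h with ⟨b, rfl⟩ | ⟨i, hi, rfl⟩
  · exact .inl ⟨_, rfl⟩
  · exact .inr ⟨i+1, by omega, by simp [liftT]⟩

theorem OE.sub {m n t s τ} (h : OE m t s) (h1 : ∀ i, i < m → PV n (τ i))
    (h2 : ∀ i, τ (m + i) = var (n + i)) : OE n (applySub τ t) (applySub τ s) := by
  intro ρ hρ
  rw [sub_sub, sub_sub]
  apply h
  refine ⟨fun i hi => (h1 i hi).value hρ.1, fun i => ?_⟩
  show applySub ρ (τ (m + i)) = var i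
  rw [h2]
  exact hρ.2 i

inductive H : ℕ → Tm → Tm → Prop
  | var {n i s} : OE n (var i) s → H n (var i) s
  | lam {n b b' s} : H (n+1) b b' → OE n (lam b') s → H n (lam b) s
  | app {n a a' b b' s} : H n a a' → H n b b' → OE n (app a' b') s → H n (app a b) s
  | shift {n b b' s} : H (n+1) b b' → OE n (shift b') s → H n (shift b) s
  | reset {n b b' s} : H n b b' → OE n (reset b') s → H n (reset b) s

theorem H.refl (t : Tm) : ∀ n, H n t t := by
  induction t with
  | var i => exact fun n => .var (.refl _ _)
  | lam t ih => exact fun n => .lam (ih _) (.refl _ _)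
  | app a b iha ihb => exact fun n => .app (iha _) (ihb _) (.refl _ _)
  | shift t ih => exact fun n => .shift (ih _) (.refl _ _)
  | reset t ih => exact fun n => .reset (ih _) (.refl _ _)

theorem H.right {n t s u} (h : H n t s) (h' : OE n s u) : H n t u := by
  cases h with
  | var h => exact .var (h.trans h')
  | lam h1 h => exact .lam h1 (h.trans h')
  | app h1 h2 h => exact .app h1 h2 (h.trans h')
  | shift h1 h => exact .shift h1 (h.trans h')
  | reset h1 h => exact .reset h1 (h.trans h')

theorem OE.toH {n t s} (h : OE n t s) : H n t s := (H.refl t n).right h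

theorem H.cLam {n b b'} (h : H (n+1) b b') : H n (Tm.lam b) (Tm.lam b') := .lam h (.refl _ _)
theorem H.cShift {n b b'} (h : H (n+1) b b') : H n (Tm.shift b) (Tm.shift b') :=
  .shift h (.refl _ _)
theorem H.cReset {n b b'} (h : H n b b') : H n (Tm.reset b) (Tm.reset b') := .reset h (.refl _ _)
theorem H.cApp {n a a' b b'} (h : H n a a') (h' : H n b b') : H n (Tm.app a b) (Tm.app a' b') :=
  .app h h' (.refl _ _)

theorem H.ren {m t s} (h : H m t s) : ∀ {n : ℕ} {f : ℕ → ℕ}, (∀ i, i < m → f i < n) →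
    (∀ i, f (m + i) = n + i) →
    H n (applySub (fun i => Tm.var (f i)) t) (applySub (fun i => Tm.var (f i)) s) := by
  have oe : ∀ {m n : ℕ} {f : ℕ → ℕ} {t s}, (∀ i, i < m → f i < n) → (∀ i, f (m + i) = n + i) →
      OE m t s → OE n (applySub (fun i => Tm.var (f i)) t) (applySub (fun i => Tm.var (f i)) s) := by
    intro m n f t s h1 h2 h
    exact h.sub (fun i hi => .inr ⟨f i, h1 i hi, rfl⟩) (fun i => by rw [h2])
  have up1 : ∀ {m n : ℕ} {f : ℕ → ℕ}, (∀ i, i < m → f i < n) → ∀ i, i < m+1 → upR f i < n+1 := by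
    intro m n f h i hi
    cases i with
    | zero => simp [upR]
    | succ i => have := h i (by omega); simp only [upR]; omega
  have up2 : ∀ {m n : ℕ} {f : ℕ → ℕ}, (∀ i, f (m + i) = n + i) →
      ∀ i, upR f (m + 1 + i) = n + 1 + i := by
    intro m n f h i
    have : m + 1 + i = (m + i) + 1 := by omega
    rw [this]; simp only [upR, h]; omega
  induction h with
  | var h => intro n f h1 h2; exact .var (oe h1 h2 h)
  | lam _ h ih =>
    intro n f h1 h2
    have a := ih (up1 h1) (up2 h2)
    have b := oe h1 h2 h
    simp only [applySub, liftSub_ren] at a b ⊢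
    exact .lam a b
  | app _ _ h ih ih' => intro n f h1 h2; exact .app (ih h1 h2) (ih' h1 h2) (oe h1 h2 h)
  | shift _ h ih =>
    intro n f h1 h2
    have a := ih (up1 h1) (up2 h2)
    have b := oe h1 h2 h
    simp only [applySub, liftSub_ren] at a b ⊢
    exact .shift a b
  | reset _ h ih => intro n f h1 h2; exact .reset (ih h1 h2) (oe h1 h2 h)

theorem H.weaken {n t s} (h : H n t s) : H (n+1) (liftT 1 0 t) (liftT 1 0 s) := by
  rw [lift1_eq, lift1_eq]
  exact h.ren (fun i hi => by omega) (fun i => by omega)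

structure SubRel (m n : ℕ) (σ τ : ℕ → Tm) : Prop where
  rel : ∀ i, H n (σ i) (τ i)
  pv : ∀ i, i < m → PV n (τ i)
  tail : ∀ i, τ (m + i) = var (n + i)

theorem SubRel.up {m n σ τ} (h : SubRel m n σ τ) :
    SubRel (m+1) (n+1) (liftSub σ) (liftSub τ) := by
  refine ⟨fun i => ?_, fun i hi => ?_, fun i => ?_⟩
  · cases i with
    | zero => exact .refl _ _
    | succ i => exact (h.rel i).weaken
  · cases i with
    | zero => exact .inr ⟨0, by omega, rfl⟩
    | succ i => exact (h.pv i (by omega)).lift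
  · have : m + 1 + i = (m + i) + 1 := by omega
    rw [this]
    simp only [liftSub, h.tail, liftT, Nat.not_lt_zero, if_false]
    congr 1; omega

theorem H.sub {m t s} (h : H m t s) : ∀ {n : ℕ} {σ τ : ℕ → Tm}, SubRel m n σ τ →
    H n (applySub σ t) (applySub τ s) := by
  induction h with
  | var h => intro n σ τ hr; exact (hr.rel _).right (h.sub hr.pv hr.tail)
  | lam _ h ih => intro n σ τ hr; exact .lam (ih hr.up) (h.sub hr.pv hr.tail)
  | app _ _ h ih ih' => intro n σ τ hr; exact .app (ih hr) (ih' hr) (h.sub hr.pv hr.tail)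
  | shift _ h ih => intro n σ τ hr; exact .shift (ih hr.up) (h.sub hr.pv hr.tail)
  | reset _ h ih => intro n σ τ hr; exact .reset (ih hr) (h.sub hr.pv hr.tail)

theorem H.subst0 {t s v w} (h : H 1 t s) (hv : H 0 v w) (hw : IsValue w) :
    H 0 (substT 0 v t) (substT 0 w s) := by
  rw [subst0_eq, subst0_eq]
  refine h.sub ⟨fun i => ?_, fun i hi => ?_, fun i => ?_⟩
  · cases i with
    | zero => exact hv
    | succ i => exact .refl _ _
  · have : i = 0 := by omega
    subst this; exact .inl hw
  · rw [Nat.add_comm]; simp [single]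

/-- Compatibility of `H` under arbitrary (not necessarily value) substitutions. -/
theorem H.subst_tm (t : Tm) : ∀ {n : ℕ} {σ τ : ℕ → Tm}, (∀ i, H n (σ i) (τ i)) →
    H n (applySub σ t) (applySub τ t) := by
  have up : ∀ {n : ℕ} {σ τ : ℕ → Tm}, (∀ i, H n (σ i) (τ i)) →
      ∀ i, H (n+1) (liftSub σ i) (liftSub τ i) := by
    intro n σ τ h i
    cases i with
    | zero => exact .refl _ _
    | succ i => exact (h i).weaken
  induction t with
  | var i => intro n σ τ h; exact h i
  | lam t ih => intro n σ τ h; exact (ih (up h)).cLam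
  | app a b iha ihb => intro n σ τ h; exact (iha h).cApp (ihb h)
  | shift t ih => intro n σ τ h; exact (ih (up h)).cShift
  | reset t ih => intro n σ τ h; exact (ih h).cReset

/-! ### Howe closure is a simulation -/

inductive PH : PCtx → PCtx → Prop
  | hole : PH .hole .hole
  | appV {b b' E E'} : H 0 (lam b) (lam b') → PH E E' → PH (.appV b E) (.appV b' E')
  | appL {E E' t t'} : PH E E' → H 0 t t' → PH (.appL E t) (.appL E' t')

theorem PH.refl (E : PCtx) : PH E E := by
  induction E with
  | hole => exact .hole
  | appV b E ih => exact .appV (.refl _ _) ih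
  | appL E t ih => exact .appL ih (.refl _ _)

theorem PH.plug {E E'} (h : PH E E') : ∀ {t t'}, H 1 t t' →
    H 1 ((E.liftC 1 0).plug t) ((E'.liftC 1 0).plug t') := by
  induction h with
  | hole => intro t t' h; exact h
  | appV hb _ ih => intro t t' h; exact ih (H.cApp hb.weaken h)
  | appL _ ht ih => intro t t' h; exact ih (H.cApp h ht.weaken)

theorem PH.cont {E E'} (h : PH E E') : H 0 (contOf E) (contOf E') :=
  (h.plug (H.refl _ _)).cReset.cLam

def LH : Label → Label → Prop
  | .tau, .tau => True
  | .val v, .val v' => (IsValue v → IsValue v') ∧ H 0 v v'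
  | .ctx E, .ctx E' => PH E E'
  | _, _ => False

theorem LH.refl (l : Label) : LH l l := by
  cases l with
  | tau => trivial
  | val v => exact ⟨id, .refl _ _⟩
  | ctx E => exact PH.refl E

theorem H.lam_eval {b s} (h : H 0 (Tm.lam b) s) :
    ∃ a, TauStar s (Tm.lam a) ∧ H 0 (Tm.lam b) (Tm.lam a) := by
  cases h with
  | lam h1 h2 =>
    obtain ⟨a, h3, h4⟩ := (OE_zero.1 h2).lam_eval
    exact ⟨a, h3, .lam h1 (OE_zero.2 h4)⟩

theorem H.lam_app {b a v w} (h : H 0 (Tm.lam b) (Tm.lam a)) (hv : H 0 v w) (hw : IsValue w) :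
    H 0 (substT 0 v b) (substT 0 w a) := by
  cases h with
  | lam h1 h2 => exact (h1.subst0 hv hw).right (OE_zero.2 ((OE_zero.1 h2).lam_app hw))

theorem tau_appL {a a' b} (h : TauStar a a') : TauStar (app a b) (app a' b) :=
  rtg_lift (fun x => app x b) (fun _ _ hs => Step.appL hs) h

theorem tau_appR {v b b'} (h : TauStar b b') : TauStar (app (lam v) b) (app (lam v) b') :=
  rtg_lift (fun x => app (lam v) x) (fun _ _ hs => Step.appR ⟨_, rfl⟩ hs) h

theorem tau_reset {b b'} (h : TauStar b b') : TauStar (reset b) (reset b') :=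
  rtg_lift reset (fun _ _ hs => Step.resetT hs) h

/-- Finish a case: pass from the intermediate term to the right-hand side. -/
theorem H.finish {p s l t'} (h : OE 0 p s) (hp : ∃ p', Weak p l p' ∧ H 0 t' p') :
    ∃ s', Weak s l s' ∧ H 0 t' s' := by
  obtain ⟨p', h1, h2⟩ := hp
  obtain ⟨s', h3, h4⟩ := isSim_bisim.weak (OE_zero.1 h) h1
  exact ⟨s', h3, h2.right (OE_zero.2 h4)⟩

theorem LH.tau {l'} (h : LH .tau l') : l' = .tau := by
  cases l' <;> first | rfl | exact h.elim

theorem LH.ctx {E l'} (h : LH (.ctx E) l') : ∃ E', l' = .ctx E' ∧ PH E E' := by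
  cases l' with
  | tau => exact h.elim
  | val v => exact h.elim
  | ctx E' => exact ⟨E', rfl, h⟩

theorem LH.val {v l'} (h : LH (.val v) l') :
    ∃ v', l' = .val v' ∧ (IsValue v → IsValue v') ∧ H 0 v v' := by
  cases l' with
  | tau => exact h.elim
  | ctx v => exact h.elim
  | val v' => exact ⟨v', rfl, h⟩

theorem H.key {t l t'} (hs : Step t l t') : ∀ {s l'}, H 0 t s → LH l l' →
    ∃ s', Weak s l' s' ∧ H 0 t' s' := by
  induction hs with
  | @beta t v hv =>
    intro s l' h hl
    obtain rfl := hl.tau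
    obtain ⟨c, rfl⟩ := hv
    cases h with
    | app ha hb h =>
      apply H.finish h
      obtain ⟨a1, h1, h2⟩ := ha.lam_eval
      obtain ⟨b1, h3, h4⟩ := hb.lam_eval
      have hw : IsValue (Tm.lam b1) := ⟨_, rfl⟩
      exact ⟨_, ((Weak.of_step (Step.beta hw)).prepend (tau_appR h3)).prepend (tau_appL h1),
        h2.lam_app h4 hw⟩
  | @resetVal v hv =>
    intro s l' h hl
    obtain rfl := hl.tau
    obtain ⟨c, rfl⟩ := hv
    cases h with
    | reset hb h =>
      apply H.finish h
      obtain ⟨b1, h3, h4⟩ := hb.lam_eval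
      exact ⟨_, (Weak.of_step (Step.resetVal ⟨_, rfl⟩)).prepend (tau_reset h3), h4⟩
  | appL _ ih =>
    intro s l' h hl
    obtain rfl := hl.tau
    cases h with
    | app ha hb h =>
      apply H.finish h
      obtain ⟨a1, h1, h2⟩ := ih (l' := .tau) ha trivial
      exact ⟨_, tau_appL h1, h2.cApp hb⟩
  | appR hv _ ih =>
    intro s l' h hl
    obtain rfl := hl.tau
    obtain ⟨c, rfl⟩ := hv
    cases h with
    | app ha hb h =>
      apply H.finish h
      obtain ⟨a1, h1, h2⟩ := ha.lam_eval
      obtain ⟨b1, h3, h4⟩ := ih (l' := .tau) hb trivial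
      exact ⟨_, Relation.ReflTransGen.trans (tau_appL h1) (tau_appR h3), h2.cApp h4⟩
  | resetT _ ih =>
    intro s l' h hl
    obtain rfl := hl.tau
    cases h with
    | reset hb h =>
      apply H.finish h
      obtain ⟨b1, h3, h4⟩ := ih (l' := .tau) hb trivial
      exact ⟨_, tau_reset h3, h4.cReset⟩
  | resetCap _ ih =>
    intro s l' h hl
    obtain rfl := hl.tau
    cases h with
    | reset hb h =>
      apply H.finish h
      obtain ⟨b1, ⟨u, h1, h2⟩, h3⟩ := ih (l' := .ctx .hole) hb PH.hole
      exact ⟨_, (Weak.of_step (Step.resetCap h2)).prepend (tau_reset h1), h3⟩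
  | lamApp hv =>
    intro s l' h hl
    obtain ⟨v', rfl, hv', hvv⟩ := hl.val
    obtain ⟨a, h1, h2⟩ := h.lam_eval
    exact ⟨_, (Weak.of_step (Step.lamApp (hv' hv))).prepend h1, h2.lam_app hvv (hv' hv)⟩
  | shiftCap E =>
    intro s l' h hl
    obtain ⟨E', rfl, hE⟩ := hl.ctx
    cases h with
    | shift hb h =>
      apply H.finish h
      exact ⟨_, Weak.of_step (Step.shiftCap E'), (hb.subst0 hE.cont ⟨_, rfl⟩).cReset⟩
  | capL _ ih =>
    intro s l' h hl
    obtain ⟨E', rfl, hE⟩ := hl.ctx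
    cases h with
    | @app _ _ a' _ b' _ ha hb h =>
      apply H.finish h
      obtain ⟨p, ⟨u, h1, h2⟩, h3⟩ := ih (l' := .ctx (.appL E' b')) ha (PH.appL hE hb)
      exact ⟨p, (Weak.of_step (Step.capL h2)).prepend (tau_appL h1), h3⟩
  | capR _ ih =>
    intro s l' h hl
    obtain ⟨E', rfl, hE⟩ := hl.ctx
    cases h with
    | @app _ _ a' _ b' _ ha hb h =>
      apply H.finish h
      obtain ⟨a1, h1, h2⟩ := ha.lam_eval
      obtain ⟨p, ⟨u, h3, h4⟩, h5⟩ := ih (l' := .ctx (.appV a1 E')) hb (PH.appV h2 hE)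
      exact ⟨p, ((Weak.of_step (Step.capR h4)).prepend (tau_appR h3)).prepend (tau_appL h1), h5⟩

theorem isSim_H : IsSim (H 0) := fun _ _ h _ _ hs => H.key hs h (LH.refl _)

theorem isSim_transGen {R} (hR : IsSim R) : IsSim (Relation.TransGen R) := by
  intro t s h
  induction h with
  | single h =>
    intro l t' hs
    obtain ⟨s', h1, h2⟩ := hR h hs
    exact ⟨s', h1, .single h2⟩
  | tail _ h ih =>
    intro l t' hs
    obtain ⟨u', h1, h2⟩ := ih hs
    obtain ⟨s', h3, h4⟩ := hR.weak h h1
    exact ⟨s', h3, .tail h2 h4⟩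

theorem H.symm_trans {n t s} (h : H n t s) : Relation.TransGen (H n) s t := by
  induction h with
  | var h => exact .single h.symm.toH
  | lam _ h ih =>
    exact .head h.symm.toH (tg_lift Tm.lam (fun _ _ hs => H.cLam hs) ih)
  | @app n a a' b b' s _ _ h ih ih' =>
    refine .head h.symm.toH (.trans
      (tg_lift (fun x => Tm.app x b') (fun _ _ hs => H.cApp hs (.refl _ _)) ih)
      (tg_lift (fun x => Tm.app a x) (fun _ _ hs => H.cApp (.refl _ _) hs) ih'))
  | shift _ h ih =>
    exact .head h.symm.toH (tg_lift Tm.shift (fun _ _ hs => H.cShift hs) ih)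
  | reset _ h ih =>
    exact .head h.symm.toH (tg_lift Tm.reset (fun _ _ hs => H.cReset hs) ih)

theorem transGen_symm {n t s} (h : Relation.TransGen (H n) t s) : Relation.TransGen (H n) s t := by
  induction h with
  | single h => exact h.symm_trans
  | tail _ h ih => exact h.symm_trans.trans ih

theorem H.bisim {t s} (h : H 0 t s) : Bisim t s := by
  have hsim := isSim_transGen isSim_H
  refine ⟨Relation.TransGen (H 0), ⟨hsim, ?_⟩, .single h⟩
  intro a b hab l a' hs
  obtain ⟨b', h1, h2⟩ := hsim (transGen_symm hab) hs
  exact ⟨b', h1, transGen_symm h2⟩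

/-! ### Free variables behave like a diverging term -/

theorem omega_step {l u} (h : Step OmegaTm l u) : l = .tau ∧ u = OmegaTm := by
  unfold OmegaTm omegaTm at h
  cases h with
  | beta hv => exact ⟨rfl, by simp [substT, liftT, OmegaTm, omegaTm]⟩
  | appL h => cases h
  | appR _ h => cases h
  | capL h => cases h
  | capR h => cases h

theorem var_bisim_omega (i : ℕ) : Bisim (var i) OmegaTm := by
  refine ⟨fun a b => a = var i ∧ b = OmegaTm, ⟨?_, ?_⟩, rfl, rfl⟩
  · rintro a b ⟨rfl, rfl⟩ l a' hs
    cases hs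
  · rintro b a ⟨rfl, rfl⟩ l b' hs
    obtain ⟨rfl, rfl⟩ := omega_step hs
    exact ⟨var i, Relation.ReflTransGen.refl, rfl, rfl⟩

theorem closedUnder_lift (t : Tm) : ∀ {c k : ℕ}, ClosedUnder c t → ClosedUnder (c+1) (liftT 1 k t) := by
  induction t with
  | var i =>
    intro c k h
    simp only [liftT]
    split_ifs <;> simp only [ClosedUnder] at h ⊢ <;> omega
  | lam t ih => intro c k h; exact ih (c := c+1) h
  | app a b iha ihb => intro c k h; exact ⟨iha h.1, ihb h.2⟩
  | shift t ih => intro c k h; exact ih (c := c+1) h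
  | reset t ih => intro c k h; exact ih (c := c) h

theorem closedUnder_sub (t : Tm) : ∀ {c : ℕ} {σ : ℕ → Tm}, (∀ i, ClosedUnder c (σ i)) →
    ClosedUnder c (applySub σ t) := by
  have up : ∀ {c : ℕ} {σ : ℕ → Tm}, (∀ i, ClosedUnder c (σ i)) →
      ∀ i, ClosedUnder (c+1) (liftSub σ i) := by
    intro c σ h i
    cases i with
    | zero => exact Nat.succ_pos c
    | succ i => exact closedUnder_lift _ (h i)
  induction t with
  | var i => intro c σ h; exact h i
  | lam t ih => intro c σ h; exact ih (up h)
  | app a b iha ihb => intro c σ h; exact ⟨iha h, ihb h⟩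
  | shift t ih => intro c σ h; exact ih (up h)
  | reset t ih => intro c σ h; exact ih (c := c) h

/-- Close a term by replacing its free variables with a diverging term. -/
def close (t : Tm) : Tm := applySub (fun _ => OmegaTm) t

theorem close_closed (t : Tm) : Closed (close t) :=
  closedUnder_sub t (fun _ => by simp [OmegaTm, omegaTm, ClosedUnder])

theorem H_close (t : Tm) : H 0 t (close t) := by
  have := H.subst_tm t (n := 0) (σ := var) (τ := fun _ => OmegaTm)
    (fun i => (OE_zero.2 (var_bisim_omega i)).toH)
  rwa [applySub_var] at this

theorem openExt_values {t0 t1} (h : OpenExt Bisim t0 t1) {θ : ℕ → Tm} (hθ : ∀ i, IsValue (θ i)) :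
    Bisim (applySub θ t0) (applySub θ t1) := by
  have e : ∀ t, Bisim (applySub θ t) (applySub (fun i => close (θ i)) t) :=
    fun t => (H.subst_tm t (fun i => H_close (θ i))).bisim
  refine ((e t0).trans (h _ fun i => ⟨?_, close_closed _⟩)).trans (e t1).symm
  obtain ⟨b, hb⟩ := hθ i
  rw [hb]
  exact ⟨_, rfl⟩

theorem plug_H {t0 t1} (h : OpenExt Bisim t0 t1) (C : Ctx) : ∀ {n : ℕ} {σ : ℕ → Tm},
    (∀ i, PV n (σ i)) → H n (applySub σ (C.plug t0)) (applySub σ (C.plug t1)) := by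
  have up : ∀ {n : ℕ} {σ : ℕ → Tm}, (∀ i, PV n (σ i)) → ∀ i, PV (n+1) (liftSub σ i) := by
    intro n σ hσ i
    cases i with
    | zero => exact .inr ⟨0, Nat.succ_pos n, rfl⟩
    | succ i => exact (hσ i).lift
  induction C with
  | hole =>
    intro n σ hσ
    refine OE.toH fun ρ hρ => ?_
    simp only [Ctx.plug]
    rw [sub_sub, sub_sub]
    exact openExt_values h fun i => (hσ i).value hρ.1
  | lam C ih => intro n σ hσ; exact (ih (up hσ)).cLam
  | appL C s ih => intro n σ hσ; exact (ih hσ).cApp (.refl _ _)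
  | appR s C ih => intro n σ hσ; exact H.cApp (.refl _ _) (ih hσ)
  | shift C ih => intro n σ hσ; exact (ih (up hσ)).cShift
  | reset C ih => intro n σ hσ; exact (ih hσ).cReset

end LamS

open LamS LamS.Tm in
/-- applicative bisimilarity is a congruence. -/
theorem bisim_congruence :
    ∀ t0 t1 : Tm, OpenExt Bisim t0 t1 →
      ∀ C : Ctx, OpenExt Bisim (C.plug t0) (C.plug t1) := by
  intro t0 t1 h C σ hσ
  exact (plug_H h C (n := 0) fun i => .inl (hσ i).1).bisim
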